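/- arXiv:2603.02863 — 2 statements merged into one kernel-verified Lean document; each statement's English description precedes it below -/
import Mathlib

section
/- Let step : ℕ → ℕ → Prop be the relation defined by step x y ↔ (y = x + 1) ∨ (6 ≤ x ∧ y = x - 5). Then for all natural numbers n and m with n ≥ 1 and m ≥ 1, m is reachable from n under the reflexive–transitive closure of step; that is, Relation.ReflTransGen step n m holds. -/
def step (x y : ℕ) : Prop := (y = x + 1) ∨ (6 ≤ x ∧ y = x - 5)

open Relation

theorem step_succ (x : ℕ) : step x (x + 1) :=
  Or.inl rfl

theorem step_add_five_self {x : ℕ} (hx : 1 ≤ x) : step (x + 5) x :=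
  Or.inr ⟨Nat.add_le_add_right hx 5, (Nat.add_sub_cancel x 5).symm⟩

theorem reflTransGen_step_of_le {x y : ℕ} (hxy : x ≤ y) : ReflTransGen step x y :=
  reflTransGen_of_succ_of_le step (fun i _ ↦ step_succ i) hxy

theorem reflTransGen_step_succ_self {x : ℕ} (hx : 1 ≤ x) : ReflTransGen step (x + 1) x := by
  have climb : ReflTransGen step (x + 1) (x + 5) := reflTransGen_step_of_le (by lia)
  exact climb.tail (step_add_five_self hx)

theorem reflTransGen_step_of_ge {x y : ℕ} (hy : 1 ≤ y) (hyx : y ≤ x) :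
    ReflTransGen step x y := by
  rw [← reflTransGen_eq_self (r := ReflTransGen step)]
  exact reflTransGen_of_succ_of_ge (ReflTransGen step)
    (fun _ hi ↦ reflTransGen_step_succ_self (hy.trans hi.1)) hyx

theorem counters_reachable (n m : ℕ) (hn : n ≥ 1) (hm : m ≥ 1) :
    Relation.ReflTransGen step n m :=
  (le_total n m).elim reflTransGen_step_of_le (reflTransGen_step_of_ge hm)
end

section
/- Let step3 : ℕ → ℕ → Prop be the relation defined by step3 x y ↔ (y = x + 3) ∨ (6 ≤ x ∧ y = x - 5). Then for all natural numbers n and m with n ≥ 1 and m ≥ 1, m is reachable from n under the reflexive–transitive closure of step3; that is, Relation.ReflTransGen step3 n m holds. -/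
def step3 (x y : ℕ) : Prop := (y = x + 3) ∨ (6 ≤ x ∧ y = x - 5)

/-!
Climb first, descend afterwards. If the increment `a` and the decrement `b` are coprime, the Chinese
remainder theorem provides arbitrarily large `N` with `N ≡ n [MOD a]` and `N ≡ m [MOD b]`. Such an
`N` is reached from `n` by increments alone, and `m` is reached from `N` by decrements alone; the
latter are all legal because the counter never drops below `m ≥ 1`.
-/

open Relation

/-- One move on a pile of counters: either add `a` counters, or remove `b` counters provided that at
least one is left. The case `a = 3`, `b = 5` is `step3`. -/
def CounterStep (a b x y : ℕ) : Prop := y = x + a ∨ (b < x ∧ y = x - b)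

section CounterStep

variable {a b : ℕ}

theorem counterStep_add_right (x : ℕ) : CounterStep a b x (x + a) :=
  Or.inl rfl

theorem counterStep_add_left {x : ℕ} (hx : 0 < x) : CounterStep a b (x + b) x :=
  Or.inr ⟨Nat.lt_add_of_pos_left hx, (Nat.add_sub_cancel x b).symm⟩

theorem reflTransGen_counterStep_add_mul_right (x k : ℕ) :
    ReflTransGen (CounterStep a b) x (x + a * k) := by
  induction k with
  | zero => exact .refl
  | succ k ih =>
    rw [mul_add_one, ← add_assoc]
    exact ih.tail (counterStep_add_right (x + a * k))

theorem reflTransGen_counterStep_add_mul_left {x : ℕ} (hx : 0 < x) (k : ℕ) :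
    ReflTransGen (CounterStep a b) (x + b * k) x := by
  induction k with
  | zero => exact .refl
  | succ k ih =>
    rw [mul_add_one, ← add_assoc]
    exact ih.head (counterStep_add_left (Nat.add_pos_left hx (b * k)))

end CounterStep

theorem exists_eq_add_mul_of_modEq {d x y : ℕ} (hxy : x ≤ y) (h : y ≡ x [MOD d]) :
    ∃ k, y = x + d * k := by
  obtain ⟨k, hk⟩ := (Nat.modEq_iff_dvd' hxy).mp h.symm
  exact ⟨k, by rw [← hk, Nat.add_sub_cancel' hxy]⟩

theorem exists_ge_modEq_and_modEq {a b : ℕ} (ha : a ≠ 0) (hb : b ≠ 0) (hab : a.Coprime b)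
    (n m B : ℕ) : ∃ N ≥ B, N ≡ n [MOD a] ∧ N ≡ m [MOD b] := by
  obtain ⟨r, hrn, hrm⟩ := Nat.chineseRemainder hab n m
  obtain ⟨N, hBN, hNr⟩ :=
    Filter.frequently_atTop.mp (Nat.frequently_modEq (mul_ne_zero ha hb) r) B
  exact ⟨N, hBN, hNr.of_mul_right b |>.trans hrn, hNr.of_mul_left a |>.trans hrm⟩

theorem counters_reachable_three_general {a b : ℕ} (ha : a ≠ 0) (hb : b ≠ 0) (hab : a.Coprime b)
    (n : ℕ) {m : ℕ} (hm : 0 < m) : ReflTransGen (CounterStep a b) n m := by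
  obtain ⟨N, hN, hNn, hNm⟩ := exists_ge_modEq_and_modEq ha hb hab n m (max n m)
  have climb : ReflTransGen (CounterStep a b) n N := by
    obtain ⟨k, rfl⟩ := exists_eq_add_mul_of_modEq (le_of_max_le_left hN) hNn
    exact reflTransGen_counterStep_add_mul_right n k
  have descend : ReflTransGen (CounterStep a b) N m := by
    obtain ⟨l, rfl⟩ := exists_eq_add_mul_of_modEq (le_of_max_le_right hN) hNm
    exact reflTransGen_counterStep_add_mul_left hm l
  exact climb.trans descend

theorem counters_reachable_three (n m : ℕ) (hn : n ≥ 1) (hm : m ≥ 1) :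
    Relation.ReflTransGen step3 n m :=
  counters_reachable_three_general (a := 3) (b := 5) (by decide) (by decide) (by decide) n hm
end
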